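/- Let H be the hypergraph on vertex set V = {1,…,8} with the eleven edges {4,5,6,7,8}, {2,3,5,6,8}, {2,3,4,7,8}, {1,3,5,7,8}, {1,3,4,6,8}, {1,2,6,7,8}, {1,2,4,5,8}, {3,4,5,6,7}, {1,2,4,5,7}, {1,2,3,5,6}, {2,3,4,6,7}. Then every 3-heavy restricted subhypergraph of H is 2-colorable: for every X ⊆ V and every collection E' of trace edges e ∩ X (e an edge of H) all of which have size at least 3, there is a coloring c : X → {0,1} such that every member of E' contains vertices of both colors. -/

import Mathlib

/-!
Split a set of `2 * a` vertices into two halves of size `a`. An edge with at least `a` vertices is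
monochromatic only if it is one of the two halves, so each edge of size exactly `a` spoils at most
two of the `(2 * a).choose a` splittings and the larger edges spoil none: a proper splitting exists
when there are few edges of size `a`.

Let `X` be a set of vertices of the given hypergraph. If `X` has at most six vertices, enlarge it to
six and take `a = 3`: at most nine traces have size 3, and `2 * 9 < 20`. If `X` misses at most one
vertex, take all eight vertices and `a = 4`: every trace has size at least 4, and `2 * 11 < 70`.
-/

/-- The vertex set `{1,…,8}` of the hypergraph from the paper. -/
def paperV : Finset ℕ := {1, 2, 3, 4, 5, 6, 7, 8}

/-- The eleven 5-element edges of the hypergraph from the paper. -/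
def paperE : Finset (Finset ℕ) :=
  {{4,5,6,7,8}, {2,3,5,6,8}, {2,3,4,7,8}, {1,3,5,7,8}, {1,3,4,6,8}, {1,2,6,7,8},
   {1,2,4,5,8}, {3,4,5,6,7}, {1,2,4,5,7}, {1,2,3,5,6}, {2,3,4,6,7}}

section TwoColorable

open Finset

variable {α : Type*}

/-- The hypergraph with edge set `T` is 2-colorable: some 2-coloring of the vertices leaves no edge
monochromatic. The coloring is total on the ambient type, its values outside the edges being
irrelevant. -/
def IsTwoColorable (T : Finset (Finset α)) : Prop :=
  ∃ c : α → Bool, ∀ f ∈ T, (∃ v ∈ f, c v = true) ∧ (∃ v ∈ f, c v = false)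

variable {T : Finset (Finset α)} {a : ℕ}

theorem isTwoColorable_of_not_subset [DecidableEq α] {W A : Finset α} (hW : ∀ f ∈ T, f ⊆ W)
    (hA : ∀ f ∈ T, ¬f ⊆ A) (hAc : ∀ f ∈ T, ¬f ⊆ W \ A) : IsTwoColorable T := by
  refine ⟨fun v => decide (v ∈ A), fun f hf => ?_⟩
  obtain ⟨v, hvf, hv⟩ := not_subset.mp (hAc f hf)
  obtain ⟨w, hwf, hw⟩ := not_subset.mp (hA f hf)
  have hvA : v ∈ A := by simpa [hW f hf hvf] using hv
  exact ⟨⟨v, hvf, decide_eq_true hvA⟩, w, hwf, decide_eq_false hw⟩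

theorem exists_half_notMem_of_card_lt [DecidableEq α] {W : Finset α} (hW : #W = 2 * a)
    (hT : 2 * #T < a.centralBinom) : ∃ A ⊆ W, #A = a ∧ A ∉ T ∧ W \ A ∉ T := by
  have hspoiled : #(T ∪ T.image (W \ ·)) < #(W.powersetCard a) := calc
    #(T ∪ T.image (W \ ·)) ≤ #T + #T :=
      (card_union_le _ _).trans (Nat.add_le_add_left card_image_le _)
    _ < a.centralBinom := by rwa [← two_mul]
    _ = #(W.powersetCard a) := by rw [card_powersetCard, hW, Nat.centralBinom_eq_two_mul_choose]
  obtain ⟨A, hA, hAT⟩ := exists_mem_notMem_of_card_lt_card hspoiled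
  obtain ⟨hAW, hAa⟩ := mem_powersetCard.mp hA
  rw [mem_union, not_or] at hAT
  exact ⟨A, hAW, hAa, hAT.1, fun h =>
    hAT.2 (mem_image.mpr ⟨W \ A, h, Finset.sdiff_sdiff_eq_self hAW⟩)⟩

theorem isTwoColorable_of_two_mul_card_lt_centralBinom {V X : Finset α} (hXV : X ⊆ V)
    (hXa : #X ≤ 2 * a) (haV : 2 * a ≤ #V) (hTX : ∀ f ∈ T, f ⊆ X) (hTa : ∀ f ∈ T, a ≤ #f)
    (hT : 2 * #{f ∈ T | #f = a} < a.centralBinom) : IsTwoColorable T := by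
  classical
  obtain ⟨W, hXW, -, hW⟩ := exists_subsuperset_card_eq hXV hXa haV
  obtain ⟨A, hAW, hA, hAT, hAcT⟩ := exists_half_notMem_of_card_lt hW hT
  have hAc : #(W \ A) = a := by rw [card_sdiff_of_subset hAW]; omega
  have not_subset_half {B : Finset α} (hB : #B = a) (hBT : B ∉ {f ∈ T | #f = a}) :
      ∀ f ∈ T, ¬f ⊆ B := by
    intro f hf hfB
    obtain rfl : f = B := eq_of_subset_of_card_le hfB (hB.trans_le (hTa f hf))
    exact hBT (mem_filter.mpr ⟨hf, hB⟩)
  exact isTwoColorable_of_not_subset (fun f hf => (hTX f hf).trans hXW)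
    (not_subset_half hA hAT) (not_subset_half hAc hAcT)

theorem card_filter_card_eq_le_of_subset_traces [DecidableEq α] {E : Finset (Finset α)}
    {X : Finset α} (hT : T ⊆ E.image (· ∩ X)) (k : ℕ) :
    #{f ∈ T | #f = k} ≤ #{e ∈ E | #(e ∩ X) = k} := calc
  #{f ∈ T | #f = k} ≤ #{f ∈ E.image (· ∩ X) | #f = k} := card_le_card (filter_subset_filter _ hT)
  _ ≤ #{e ∈ E | #(e ∩ X) = k} := by rw [filter_image]; exact card_image_le

theorem card_add_card_le_card_inter_add_card [DecidableEq α] {e X V : Finset α}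
    (he : e ⊆ V) (hX : X ⊆ V) :
    #e + #X ≤ #(e ∩ X) + #V := by
  rw [← card_inter_add_card_union]
  exact Nat.add_le_add_left (card_le_card (union_subset he hX)) _

theorem subset_paperV_and_card_eq_five : ∀ e ∈ paperE, e ⊆ paperV ∧ #e = 5 := by
  decide

theorem card_filter_card_inter_eq_three_le_nine :
    ∀ X ⊆ paperV, #{e ∈ paperE | #(e ∩ X) = 3} ≤ 9 := by
  decide +kernel

theorem four_le_card_inter {e X : Finset ℕ} (he : e ∈ paperE) (hX : X ⊆ paperV)
    (hXcard : 7 ≤ #X) : 4 ≤ #(e ∩ X) := by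
  obtain ⟨heV, hecard⟩ := subset_paperV_and_card_eq_five e he
  have hinter := card_add_card_le_card_inter_add_card heV hX
  have hV : #paperV = 8 := rfl
  omega

end TwoColorable

/-- Every 3-heavy restricted subhypergraph of the hypergraph from the paper is
2-colorable: for every `X ⊆ V` and every collection `E'` of trace edges `e ∩ X`
all of size at least 3, there is a 2-coloring in which every member of `E'`
contains both colors. -/
theorem stmt_3 : ∀ X ⊆ paperV, ∀ E' ⊆ paperE.image (· ∩ X),
    (∀ f ∈ E', 3 ≤ f.card) →
    ∃ c : ℕ → Bool, ∀ f ∈ E', (∃ v ∈ f, c v = true) ∧ (∃ v ∈ f, c v = false) := by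
  intro X hX E' hE' hcard
  have hsub : ∀ f ∈ E', f ⊆ X := by
    intro f hf
    obtain ⟨e, -, rfl⟩ := Finset.mem_image.mp (hE' hf)
    exact Finset.inter_subset_right
  have hcount := card_filter_card_eq_le_of_subset_traces hE'
  obtain hX6 | hX7 : X.card ≤ 6 ∨ 7 ≤ X.card := by omega
  · have hnine : (E'.filter fun f => f.card = 3).card ≤ 9 :=
      (hcount 3).trans (card_filter_card_inter_eq_three_le_nine X hX)
    have hcentral : Nat.centralBinom 3 = 20 := by decide
    exact isTwoColorable_of_two_mul_card_lt_centralBinom (a := 3) hX hX6 (by decide) hsub hcard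
      (by omega)
  · have hfour : ∀ f ∈ E', 4 ≤ f.card := by
      intro f hf
      obtain ⟨e, he, rfl⟩ := Finset.mem_image.mp (hE' hf)
      exact four_le_card_inter he hX hX7
    have heleven : (E'.filter fun f => f.card = 4).card ≤ 11 :=
      (hcount 4).trans (Finset.card_filter_le paperE _)
    have hcentral : Nat.centralBinom 4 = 70 := by decide
    exact isTwoColorable_of_two_mul_card_lt_centralBinom (a := 4) hX (Finset.card_le_card hX)
      (by decide) hsub hfour (by omega)
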